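/- Let V be a real vector space with a symmetric bilinear form B, and suppose V = H ⊕ W with B(h, w) = 0 for all h ∈ H, w ∈ W, B positive semidefinite on H, and B negative semidefinite on W. Let c ∈ ℝ and let α ∈ V satisfy B(α, α) ≥ c. Then for any finite family f₁, …, fₙ ∈ V there exist signs ε₁, …, εₙ ∈ {+1, −1} such that, setting γ = α + Σᵢ εᵢ fᵢ and letting γ⁺ denote the H-component of γ, one has B(γ⁺, γ⁺) ≥ c. -/

import Mathlib

/-- Greedy choice of signs inside a positive semidefinite subspace. -/
theorem stmt_3_aux (V : Type*) [AddCommGroup V] [Module ℝ V]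
    (B : V →ₗ[ℝ] V →ₗ[ℝ] ℝ) (hsymm : ∀ x y, B x y = B y x)
    (c : ℝ) (a : V) (ha : c ≤ B a a) (n : ℕ) :
    ∀ g : Fin n → V, (∀ i, 0 ≤ B (g i) (g i)) →
    ∃ ε : Fin n → ℝ, (∀ i, ε i = 1 ∨ ε i = -1) ∧
      c ≤ B (a + ∑ i, ε i • g i) (a + ∑ i, ε i • g i) := by
  induction n with
  | zero => intro g _; exact ⟨fun _ => 1, fun _ => Or.inl rfl, by simpa using ha⟩
  | succ n ih =>
    intro g hg
    obtain ⟨ε, hε, hc⟩ := ih (fun i => g i.castSucc) (fun i => hg _)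
    set s := a + ∑ i, ε i • g i.castSucc with hs
    have hl := hg (Fin.last n)
    obtain ⟨t, ht, htc⟩ : ∃ t : ℝ, (t = 1 ∨ t = -1) ∧ 0 ≤ t * B s (g (Fin.last n)) := by
      rcases le_total 0 (B s (g (Fin.last n))) with h | h
      · exact ⟨1, Or.inl rfl, by linarith⟩
      · exact ⟨-1, Or.inr rfl, by linarith⟩
    have htt : t * t = 1 := by rcases ht with rfl | rfl <;> norm_num
    refine ⟨Fin.snoc (α := fun _ => ℝ) ε t, ?_, ?_⟩
    · intro i
      refine Fin.lastCases ?_ (fun j => ?_) i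
      · simpa using ht
      · simpa using hε j
    · have e : a + ∑ i, (Fin.snoc (α := fun _ => ℝ) ε t : Fin (n+1) → ℝ) i • g i
          = s + t • g (Fin.last n) := by
        rw [Fin.sum_univ_castSucc]
        simp [hs, add_assoc]
      rw [e]
      simp only [map_add, map_smul, LinearMap.add_apply, LinearMap.smul_apply, smul_eq_mul]
      rw [hsymm (g (Fin.last n)) s, mul_add, ← mul_assoc t t, htt]
      linarith

/-- Given `V = H ⊕ W` (`B`-orthogonally), `B` positive semidefinite on `H` and
negative semidefinite on `W`, and `α` with `B(α, α) ≥ c`, for any finite family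
`f₁, …, fₙ` there are signs `εᵢ = ±1` such that the `H`-component `γ⁺` of
`γ = α + ∑ εᵢ fᵢ` satisfies `B(γ⁺, γ⁺) ≥ c`. -/
theorem stmt_3 (V : Type*) [AddCommGroup V] [Module ℝ V]
    (B : V →ₗ[ℝ] V →ₗ[ℝ] ℝ) (hsymm : ∀ x y, B x y = B y x)
    (H W : Submodule ℝ V) (hcompl : IsCompl H W)
    (horth : ∀ h ∈ H, ∀ w ∈ W, B h w = 0)
    (hposH : ∀ h ∈ H, 0 ≤ B h h)
    (hnegW : ∀ w ∈ W, B w w ≤ 0)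
    (c : ℝ) (α : V) (hα : c ≤ B α α)
    (n : ℕ) (f : Fin n → V) :
    ∃ ε : Fin n → ℝ, (∀ i, ε i = 1 ∨ ε i = -1) ∧
      ∀ γplus γminus : V, γplus ∈ H → γminus ∈ W →
        α + ∑ i, ε i • f i = γplus + γminus →
          c ≤ B γplus γplus := by
  have hdec : ∀ v : V, ∃ p ∈ H, ∃ q ∈ W, p + q = v := fun v =>
    Submodule.mem_sup.mp (hcompl.sup_eq_top ▸ Submodule.mem_top)
  choose p hp q hq hpq using hdec
  have ha : c ≤ B (p α) (p α) := by
    have h1 := hα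
    rw [← hpq α] at h1
    simp only [map_add, LinearMap.add_apply] at h1
    rw [hsymm (q α) (p α), horth _ (hp α) _ (hq α)] at h1
    linarith [hnegW _ (hq α)]
  obtain ⟨ε, hε, hc⟩ := stmt_3_aux V B hsymm c (p α) ha n (fun i => p (f i))
    (fun i => hposH _ (hp _))
  refine ⟨ε, hε, fun x y hx hy hxy => ?_⟩
  have hP : p α + ∑ i, ε i • p (f i) ∈ H :=
    H.add_mem (hp α) (H.sum_mem fun i _ => H.smul_mem _ (hp _))
  have hQ : q α + ∑ i, ε i • q (f i) ∈ W :=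
    W.add_mem (hq α) (W.sum_mem fun i _ => W.smul_mem _ (hq _))
  have hsum : (p α + ∑ i, ε i • p (f i)) + (q α + ∑ i, ε i • q (f i)) = x + y := by
    rw [← hxy, add_add_add_comm, hpq, ← Finset.sum_add_distrib]
    simp only [← smul_add, hpq]
  have hd : x - (p α + ∑ i, ε i • p (f i)) = (q α + ∑ i, ε i • q (f i)) - y := by
    rw [sub_eq_sub_iff_add_eq_add, ← hsum, add_comm]
  have hz := Submodule.disjoint_def.mp hcompl.disjoint _ (H.sub_mem hx hP)
    (hd ▸ W.sub_mem hQ hy)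
  rw [sub_eq_zero.mp hz]
  exact hc
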